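/- For every rational number r with 0 < r < 1/2 one has F(r,1−r) = 2^{4−12r} · csc(πr) · F(1−r, 3/2−2r). -/

import Mathlib

/-- The Pochhammer symbol (x)_k = x(x+1)⋯(x+k−1). -/
noncomputable def poch (x : ℝ) (k : ℕ) : ℝ := ∏ i ∈ Finset.range k, (x + i)

/-- The hypergeometric series ₃F₂(a1,a2,a3;b1,b2;1). -/
noncomputable def threeF2 (a1 a2 a3 b1 b2 : ℝ) : ℝ :=
  ∑' k : ℕ, poch a1 k * poch a2 k * poch a3 k /
    (poch b1 k * poch b2 k * (Nat.factorial k : ℝ))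

/-- The Beta function B(a,b) = Γ(a)Γ(b)/Γ(a+b). -/
noncomputable def betaFn (a b : ℝ) : ℝ :=
  Real.Gamma a * Real.Gamma b / Real.Gamma (a + b)

/-- The normalized hypergeometric value
F(r,s) = (2^{1−4r}·B(r,s−r)/N(r)) · ₃F₂(1/2,1/2,r;1,s;1), where N(r) = 2·den(r). -/
noncomputable def Fval (r s : ℚ) : ℝ :=
  (2:ℝ) ^ ((1:ℝ) - 4 * (r:ℝ)) * betaFn (r:ℝ) ((s:ℝ) - (r:ℝ)) / (2 * (r.den : ℝ)) *
    threeF2 (1/2) (1/2) (r:ℝ) 1 (s:ℝ)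

/-!
Euler's integral for `₂F₁` and the involution `y ↦ (1 - y) / (1 - t y)` of `(0, 1)` give Euler's
transformation of `₂F₁`. Integrating that identity in `t` against a beta weight gives Kummer's
transformation of `₃F₂` at `1`. At the parameters `(1/2, x, 1/2; 1, 1 - x)` it relates the two
series of the theorem, and the remaining quotient of Gamma values is evaluated by the reflection
formula at `x` and the duplication formula at `1/2 - x`.
-/

open Asymptotics Filter MeasureTheory Set
open scoped Nat Topology

section Pochhammer

lemma poch_succ (x : ℝ) (k : ℕ) : poch x (k + 1) = poch x k * (x + k) :=
  Finset.prod_range_succ _ _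

lemma poch_pos {x : ℝ} (hx : 0 < x) (k : ℕ) : 0 < poch x k :=
  Finset.prod_pos fun _ _ ↦ by positivity

lemma poch_eq_eval_ascPochhammer (x : ℝ) (k : ℕ) : poch x k = (ascPochhammer ℝ k).eval x := by
  induction k with
  | zero => simp [poch]
  | succ k ih => rw [poch_succ, ascPochhammer_succ_eval, ih]

lemma gamma_add_natCast {x : ℝ} (hx : 0 < x) (k : ℕ) :
    Real.Gamma (x + k) = poch x k * Real.Gamma x := by
  induction k with
  | zero => simp [poch]
  | succ k ih =>
    rw [Nat.cast_succ, ← add_assoc, Real.Gamma_add_one (by positivity), ih, poch_succ]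
    ring

lemma tendsto_factorial_mul_rpow_div_poch (x : ℝ) :
    Tendsto (fun k : ℕ ↦ k ! * (k : ℝ) ^ (x - 1) / poch x k) atTop (𝓝 (Real.Gamma x)) := by
  have hratio : Tendsto (fun k : ℕ ↦ (x + k) / k) atTop (𝓝 1) := by
    simpa using tendsto_add_mul_div_add_mul_atTop_nhds x 0 1 one_ne_zero
  have hprod := (Real.GammaSeq_tendsto_Gamma x).mul hratio
  rw [mul_one] at hprod
  refine hprod.congr' ?_
  filter_upwards [eventually_gt_atTop 0,
    tendsto_natCast_atTop_atTop.eventually_gt_atTop (-x)] with k hk hxk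
  have hk' : (0 : ℝ) < k := by exact_mod_cast hk
  have hxk' : x + k ≠ 0 := by linarith
  change (k : ℝ) ^ x * k ! / poch x (k + 1) * ((x + k) / k) = _
  rw [poch_succ, Real.rpow_sub_one hk'.ne']
  field_simp

lemma isBigO_inv_poch (x : ℝ) :
    (fun k ↦ (poch x k)⁻¹) =O[atTop] fun k : ℕ ↦ (k ! * (k : ℝ) ^ (x - 1))⁻¹ := by
  refine isBigO_of_div_tendsto_nhds ?_ _
    ((tendsto_factorial_mul_rpow_div_poch x).congr fun k ↦ ?_)
  · filter_upwards [eventually_gt_atTop 0] with k hk h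
    have : (0 : ℝ) < (k ! * (k : ℝ) ^ (x - 1))⁻¹ := by positivity
    exact absurd h this.ne'
  · rw [Pi.div_apply, inv_div_inv]

lemma isBigO_poch (x : ℝ) :
    poch x =O[atTop] fun k : ℕ ↦ k ! * (k : ℝ) ^ (x - 1) := by
  by_cases hx : Real.Gamma x = 0
  · obtain ⟨m, rfl⟩ := (Real.Gamma_eq_zero_iff x).1 hx
    refine EventuallyEq.trans_isBigO ?_ (isBigO_zero _ _)
    filter_upwards [eventually_gt_atTop m] with k hk
    rw [poch_eq_eval_ascPochhammer, ascPochhammer_eval_neg_coe_nat_of_lt hk]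
  · refine isBigO_of_div_tendsto_nhds ?_ _
      (((tendsto_factorial_mul_rpow_div_poch x).inv₀ hx).congr fun k ↦ ?_)
    · filter_upwards [eventually_gt_atTop 0] with k hk h
      have : (0 : ℝ) < k ! * (k : ℝ) ^ (x - 1) := by positivity
      exact absurd h this.ne'
    · rw [Pi.div_apply, inv_div]

end Pochhammer

section BetaIntegral

lemma betaFn_pos {a b : ℝ} (ha : 0 < a) (hb : 0 < b) : 0 < betaFn a b :=
  ProbabilityTheory.beta_pos ha hb

lemma betaFn_comm (a b : ℝ) : betaFn a b = betaFn b a := by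
  rw [betaFn, betaFn, mul_comm, add_comm]

lemma betaFn_add_natCast {a b : ℝ} (ha : 0 < a) (hab : 0 < a + b) (k : ℕ) :
    betaFn (a + k) b = betaFn a b * (poch a k / poch (a + b) k) := by
  rw [betaFn, betaFn, add_right_comm, gamma_add_natCast ha, gamma_add_natCast hab]
  have := poch_pos hab k
  have := Real.Gamma_pos_of_pos hab
  field_simp

lemma eqOn_ofReal_rpow_mul_one_sub_rpow (a b : ℝ) :
    EqOn (fun x : ℝ ↦ (x : ℂ) ^ ((a : ℂ) - 1) * (1 - (x : ℂ)) ^ ((b : ℂ) - 1))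
      (fun x ↦ ((x ^ (a - 1) * (1 - x) ^ (b - 1) : ℝ) : ℂ)) (Ioo 0 1) := fun x hx ↦ by
  dsimp only
  rw [Complex.ofReal_mul, Complex.ofReal_cpow hx.1.le, Complex.ofReal_cpow (sub_nonneg.2 hx.2.le)]
  push_cast
  rfl

lemma integrableOn_rpow_mul_one_sub_rpow {a b : ℝ} (ha : 0 < a) (hb : 0 < b) :
    IntegrableOn (fun x : ℝ ↦ x ^ (a - 1) * (1 - x) ^ (b - 1)) (Ioo 0 1) := by
  have h := (intervalIntegrable_iff_integrableOn_Ioo_of_le zero_le_one).1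
    (Complex.betaIntegral_convergent (u := a) (v := b) (by simpa) (by simpa))
  exact (h.congr_fun (eqOn_ofReal_rpow_mul_one_sub_rpow a b) measurableSet_Ioo).re

lemma integral_rpow_mul_one_sub_rpow {a b : ℝ} (ha : 0 < a) (hb : 0 < b) :
    ∫ x in Ioo (0 : ℝ) 1, x ^ (a - 1) * (1 - x) ^ (b - 1) = betaFn a b := by
  change _ = ProbabilityTheory.beta a b
  rw [ProbabilityTheory.beta_eq_betaIntegralReal a b ha hb, Complex.betaIntegral,
    intervalIntegral.integral_of_le zero_le_one, integral_Ioc_eq_integral_Ioo,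
    setIntegral_congr_fun measurableSet_Ioo (eqOn_ofReal_rpow_mul_one_sub_rpow a b),
    integral_complex_ofReal, Complex.ofReal_re]

lemma rpow_mul_one_sub_rpow_mul_pow {a b x : ℝ} (hx : 0 < x) (k : ℕ) :
    x ^ (a - 1) * (1 - x) ^ (b - 1) * x ^ k = x ^ (a + k - 1) * (1 - x) ^ (b - 1) := by
  rw [add_sub_right_comm, Real.rpow_add hx, Real.rpow_natCast]
  ring

lemma integral_rpow_mul_one_sub_rpow_mul_pow {a b : ℝ} (ha : 0 < a) (hb : 0 < b) (k : ℕ) :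
    ∫ x in Ioo (0 : ℝ) 1, x ^ (a - 1) * (1 - x) ^ (b - 1) * x ^ k =
      betaFn a b * (poch a k / poch (a + b) k) := by
  rw [← betaFn_add_natCast ha (add_pos ha hb), ← integral_rpow_mul_one_sub_rpow (by positivity) hb]
  exact setIntegral_congr_fun measurableSet_Ioo fun x hx ↦ rpow_mul_one_sub_rpow_mul_pow hx.1 k

lemma integral_rpow_mul_one_sub_rpow_mul_tsum {a b : ℝ} (ha : 0 < a) (hb : 0 < b) {u : ℕ → ℝ}
    (hu : Summable fun k ↦ u k * (poch a k / poch (a + b) k)) :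
    ∫ x in Ioo (0 : ℝ) 1, x ^ (a - 1) * (1 - x) ^ (b - 1) * ∑' k, u k * x ^ k =
      betaFn a b * ∑' k, u k * (poch a k / poch (a + b) k) := by
  set F : ℕ → ℝ → ℝ := fun k x ↦ u k * (x ^ (a - 1) * (1 - x) ^ (b - 1) * x ^ k)
  have hint (k : ℕ) : IntegrableOn (F k) (Ioo 0 1) :=
    ((integrableOn_rpow_mul_one_sub_rpow (a := a + k) (by positivity) hb).congr_fun
      (fun x hx ↦ (rpow_mul_one_sub_rpow_mul_pow hx.1 k).symm) measurableSet_Ioo).const_mul (u k)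
  have hnorm (k : ℕ) : ∫ x in Ioo (0 : ℝ) 1, ‖F k x‖ =
      betaFn a b * ‖u k * (poch a k / poch (a + b) k)‖ := by
    have hpos : 0 < poch a k / poch (a + b) k :=
      div_pos (poch_pos ha k) (poch_pos (add_pos ha hb) k)
    rw [norm_mul, Real.norm_of_nonneg hpos.le, mul_left_comm,
      ← integral_rpow_mul_one_sub_rpow_mul_pow ha hb, ← integral_const_mul]
    refine setIntegral_congr_fun measurableSet_Ioo fun x hx ↦ ?_
    have h0 : 0 < x := hx.1
    have h1 : 0 < 1 - x := sub_pos.2 hx.2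
    have hweight : 0 ≤ x ^ (a - 1) * (1 - x) ^ (b - 1) * x ^ k := by positivity
    rw [norm_mul, Real.norm_of_nonneg hweight]
  have hsum := hasSum_integral_of_summable_integral_norm hint
    (by simpa only [hnorm] using hu.norm.mul_left (betaFn a b))
  calc ∫ x in Ioo (0 : ℝ) 1, x ^ (a - 1) * (1 - x) ^ (b - 1) * ∑' k, u k * x ^ k
      = ∫ x in Ioo (0 : ℝ) 1, ∑' k, F k x := by
        simp only [← tsum_mul_left, F, mul_left_comm (u _)]
    _ = ∑' k, ∫ x in Ioo (0 : ℝ) 1, F k x := hsum.tsum_eq.symm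
    _ = betaFn a b * ∑' k, u k * (poch a k / poch (a + b) k) := by
        simp only [F, integral_const_mul, integral_rpow_mul_one_sub_rpow_mul_pow ha hb]
        simp only [← tsum_mul_left, mul_left_comm (betaFn a b)]

end BetaIntegral

section Gauss

lemma one_le_radius_ordinaryHypergeometricSeries (a b c : ℝ) :
    1 ≤ (ordinaryHypergeometricSeries ℝ a b c).radius := by
  by_cases habc : ∀ k : ℕ, (k : ℝ) ≠ -a ∧ (k : ℝ) ≠ -b ∧ (k : ℝ) ≠ -c
  · exact (ordinaryHypergeometricSeries_radius_eq_one ℝ a b c habc).ge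
  · obtain ⟨k, hk⟩ : ∃ k : ℕ, (k : ℝ) = -a ∨ (k : ℝ) = -b ∨ (k : ℝ) = -c := by
      contrapose! habc
      exact habc
    refine le_top.trans_eq (FormalMultilinearSeries.radius_eq_top_of_eventually_eq_zero _ ?_).symm
    filter_upwards [eventually_gt_atTop k] with n hn
    exact ordinaryHypergeometricSeries_eq_zero_of_neg_nat a b c hk hn

lemma ordinaryHypergeometric_eq_tsum_poch (a b c t : ℝ) :
    ₂F₁ a b c t = ∑' k : ℕ, poch a k / k ! * t ^ k * (poch b k / poch c k) := by
  simp only [ordinaryHypergeometric_eq_tsum, poch_eq_eval_ascPochhammer, smul_eq_mul]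
  congr 1 with k
  ring

lemma summable_ordinaryHypergeometric (a b c : ℝ) {t : ℝ} (ht : |t| < 1) :
    Summable fun k : ℕ ↦ poch a k / k ! * t ^ k * (poch b k / poch c k) := by
  have hmem : t ∈ Metric.eball (0 : ℝ) (ordinaryHypergeometricSeries ℝ a b c).radius := by
    refine mem_eball_zero_iff.2 (lt_of_lt_of_le ?_
      (one_le_radius_ordinaryHypergeometricSeries a b c))
    simpa [enorm_eq_nnnorm, ← NNReal.coe_lt_coe] using ht
  refine ((ordinaryHypergeometricSeries ℝ a b c).summable hmem).congr fun k ↦ ?_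
  rw [ordinaryHypergeometricSeries_apply_eq, smul_eq_mul]
  simp only [poch_eq_eval_ascPochhammer]
  ring

lemma tsum_poch_div_factorial_mul_pow (a : ℝ) {x : ℝ} (hx : |x| < 1) :
    ∑' k : ℕ, poch a k / k ! * x ^ k = (1 - x) ^ (-a) := by
  have hseries := (Real.one_div_one_sub_rpow_hasFPowerSeriesOnBall_zero a).hasSum
    (y := x) (by simpa [enorm_eq_nnnorm, ← NNReal.coe_lt_coe] using hx)
  rw [zero_add, one_div, ← Real.rpow_neg (by linarith [(abs_lt.1 hx).2])] at hseries
  rw [← hseries.tsum_eq]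
  refine tsum_congr fun k ↦ ?_
  have hchoose := Ring.factorial_nsmul_multichoose_eq_ascPochhammer a k
  rw [Ring.multichoose_eq, Polynomial.ascPochhammer_smeval_eq_eval, ← poch_eq_eval_ascPochhammer,
    nsmul_eq_mul] at hchoose
  rw [FormalMultilinearSeries.ofScalars_apply_eq, smul_eq_mul, ← hchoose]
  field_simp

lemma betaFn_mul_ordinaryHypergeometric (a : ℝ) {b c t : ℝ} (hb : 0 < b) (hbc : b < c)
    (ht : |t| < 1) :
    betaFn b (c - b) * ₂F₁ a b c t =
      ∫ x in Ioo (0 : ℝ) 1, x ^ (b - 1) * (1 - x) ^ (c - b - 1) * (1 - t * x) ^ (-a) := by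
  have hsum := integral_rpow_mul_one_sub_rpow_mul_tsum hb (sub_pos.2 hbc)
    (u := fun k ↦ poch a k / k ! * t ^ k)
    (by simpa only [add_sub_cancel] using summable_ordinaryHypergeometric a b c ht)
  rw [add_sub_cancel, ← ordinaryHypergeometric_eq_tsum_poch] at hsum
  rw [← hsum]
  refine setIntegral_congr_fun measurableSet_Ioo fun x hx ↦ ?_
  have htx : |t * x| < 1 := by
    rw [abs_mul, abs_of_pos hx.1]
    nlinarith [abs_nonneg t, hx.1, hx.2]
  simp only [mul_assoc, ← mul_pow, tsum_poch_div_factorial_mul_pow a htx]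

end Gauss

section EulerTransformation

/-- The involution `y ↦ (1 - y) / (1 - t y)` of the unit interval, which exchanges the two Euler
integrals related by Euler's transformation of `₂F₁`. -/
noncomputable def eulerInvolution (t y : ℝ) : ℝ := (1 - y) / (1 - t * y)

variable {t y : ℝ}

lemma one_sub_mul_pos (ht : t < 1) (hy : y ∈ Ioo (0 : ℝ) 1) : 0 < 1 - t * y := by
  nlinarith [hy.1, hy.2]

lemma one_sub_eulerInvolution (hty : 1 - t * y ≠ 0) :
    1 - eulerInvolution t y = y * (1 - t) / (1 - t * y) := by
  rw [eulerInvolution, eq_div_iff hty, sub_mul, div_mul_cancel₀ _ hty]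
  ring

lemma one_sub_mul_eulerInvolution (hty : 1 - t * y ≠ 0) :
    1 - t * eulerInvolution t y = (1 - t) / (1 - t * y) := by
  rw [eulerInvolution, eq_div_iff hty, sub_mul, mul_assoc, div_mul_cancel₀ _ hty]
  ring

lemma eulerInvolution_eulerInvolution (ht : 1 - t ≠ 0) (hty : 1 - t * y ≠ 0) :
    eulerInvolution t (eulerInvolution t y) = y := by
  conv_lhs => rw [eulerInvolution]
  rw [one_sub_eulerInvolution hty, one_sub_mul_eulerInvolution hty, div_div_div_cancel_right₀ hty,
    mul_div_cancel_right₀ _ ht]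

lemma eulerInvolution_mem_Ioo (ht : t < 1) (hy : y ∈ Ioo (0 : ℝ) 1) :
    eulerInvolution t y ∈ Ioo (0 : ℝ) 1 := by
  have hpos := one_sub_mul_pos ht hy
  refine ⟨div_pos (sub_pos.2 hy.2) hpos, sub_pos.1 ?_⟩
  rw [one_sub_eulerInvolution hpos.ne']
  exact div_pos (mul_pos hy.1 (sub_pos.2 ht)) hpos

lemma bijOn_eulerInvolution (ht : t < 1) :
    BijOn (eulerInvolution t) (Ioo 0 1) (Ioo 0 1) := by
  have hinv : LeftInvOn (eulerInvolution t) (eulerInvolution t) (Ioo 0 1) := fun y hy ↦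
    eulerInvolution_eulerInvolution (sub_pos.2 ht).ne' (one_sub_mul_pos ht hy).ne'
  have hmaps : MapsTo (eulerInvolution t) (Ioo 0 1) (Ioo 0 1) := fun y hy ↦
    eulerInvolution_mem_Ioo ht hy
  exact InvOn.bijOn ⟨hinv, hinv⟩ hmaps hmaps

lemma hasDerivAt_eulerInvolution (hty : 1 - t * y ≠ 0) :
    HasDerivAt (eulerInvolution t) (-(1 - t) / (1 - t * y) ^ 2) y := by
  have hnum : HasDerivAt (fun y : ℝ ↦ 1 - y) (-1) y := by
    simpa using (hasDerivAt_id y).const_sub 1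
  have hden : HasDerivAt (fun y : ℝ ↦ 1 - t * y) (-t) y := by
    simpa using ((hasDerivAt_id y).const_mul t).const_sub 1
  refine (hnum.div hden hty).congr_deriv ?_
  ring

lemma setIntegral_Ioo_comp_eulerInvolution (ht : t < 1) (g : ℝ → ℝ) :
    ∫ y in Ioo (0 : ℝ) 1, (1 - t) / (1 - t * y) ^ 2 * g (eulerInvolution t y) =
      ∫ x in Ioo (0 : ℝ) 1, g x := by
  have hbij := bijOn_eulerInvolution ht
  conv_rhs => rw [← hbij.image_eq, integral_image_eq_integral_abs_deriv_smul measurableSet_Ioo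
    (fun y hy ↦ (hasDerivAt_eulerInvolution (one_sub_mul_pos ht hy).ne').hasDerivWithinAt)
    hbij.injOn]
  refine setIntegral_congr_fun measurableSet_Ioo fun y hy ↦ ?_
  have hpos := one_sub_mul_pos ht hy
  have : 0 < 1 - t := sub_pos.2 ht
  rw [neg_div, abs_neg, abs_of_pos (by positivity), smul_eq_mul]

lemma eulerIntegrand_eulerInvolution (a b c : ℝ) (ht : t < 1) (hy : y ∈ Ioo (0 : ℝ) 1) :
    (1 - t) / (1 - t * y) ^ 2 * (eulerInvolution t y ^ (b - 1) *
        (1 - eulerInvolution t y) ^ (c - b - 1) * (1 - t * eulerInvolution t y) ^ (-a)) =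
      (1 - t) ^ (c - a - b) * (y ^ (c - b - 1) * (1 - y) ^ (b - 1) * (1 - t * y) ^ (-(c - a))) := by
  have h0 : 0 < y := hy.1
  have h1 : 0 < 1 - y := sub_pos.2 hy.2
  have ht' : 0 < 1 - t := sub_pos.2 ht
  have hty := one_sub_mul_pos ht hy
  rw [one_sub_eulerInvolution hty.ne', one_sub_mul_eulerInvolution hty.ne', eulerInvolution,
    Real.div_rpow h1.le hty.le, Real.div_rpow (by positivity) hty.le, Real.div_rpow ht'.le hty.le,
    Real.mul_rpow h0.le ht'.le]
  have hexp_one_sub : (1 - t) ^ (c - a - b) =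
      (1 - t) * (1 - t) ^ (c - b - 1) * (1 - t) ^ (-a) := by
    rw [show c - a - b = 1 + (c - b - 1) + -a by ring, Real.rpow_add ht', Real.rpow_add ht',
      Real.rpow_one]
  have hexp_one_sub_mul : (1 - t * y) ^ (-(c - a)) * ((1 - t * y) ^ 2 * (1 - t * y) ^ (b - 1) *
      (1 - t * y) ^ (c - b - 1) * (1 - t * y) ^ (-a)) = 1 := by
    simp only [← Real.rpow_natCast, ← Real.rpow_add hty]
    convert Real.rpow_zero _ using 2
    push_cast
    ring
  rw [hexp_one_sub]
  field_simp
  linear_combination -hexp_one_sub_mul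

lemma ordinaryHypergeometric_euler (a : ℝ) {b c : ℝ} (hb : 0 < b) (hbc : b < c) (ht : |t| < 1) :
    ₂F₁ a b c t = (1 - t) ^ (c - a - b) * ₂F₁ (c - a) (c - b) c t := by
  have ht1 : t < 1 := (abs_lt.1 ht).2
  have hdual := betaFn_mul_ordinaryHypergeometric (c - a) (sub_pos.2 hbc) (sub_lt_self c hb) ht
  rw [sub_sub_cancel, betaFn_comm] at hdual
  refine mul_left_cancel₀ (betaFn_pos hb (sub_pos.2 hbc)).ne' ?_
  rw [mul_left_comm, hdual, betaFn_mul_ordinaryHypergeometric a hb hbc ht, ← integral_const_mul,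
    ← setIntegral_Ioo_comp_eulerInvolution ht1]
  exact setIntegral_congr_fun measurableSet_Ioo fun y hy ↦
    eulerIntegrand_eulerInvolution a b c ht1 hy

end EulerTransformation

section Kummer

lemma summable_threeF2 {a₁ a₂ a₃ b₁ b₂ : ℝ} (h : a₁ + a₂ + a₃ < b₁ + b₂) :
    Summable fun k : ℕ ↦ poch a₁ k * poch a₂ k * poch a₃ k / (poch b₁ k * poch b₂ k * k !) := by
  have hO := ((((isBigO_poch a₁).mul (isBigO_poch a₂)).mul (isBigO_poch a₃)).mul
    ((isBigO_inv_poch b₁).mul (isBigO_inv_poch b₂))).mul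
    (isBigO_refl (fun k : ℕ ↦ (k ! : ℝ)⁻¹) atTop)
  have hrpow : Summable fun k : ℕ ↦ (k : ℝ) ^ (a₁ + a₂ + a₃ - b₁ - b₂ - 1) :=
    Real.summable_nat_rpow.2 (by linarith)
  refine summable_of_isBigO_nat hrpow ((hO.congr_left fun k ↦ ?_).trans_eventuallyEq ?_)
  · rw [div_eq_mul_inv, mul_inv, mul_inv]
    ring
  · filter_upwards [eventually_gt_atTop 0] with k hk
    have hk' : (0 : ℝ) < k := by exact_mod_cast hk
    have hpow : (k : ℝ) ^ (a₁ + a₂ + a₃ - b₁ - b₂ - 1) =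
        (k : ℝ) ^ (a₁ - 1) * (k : ℝ) ^ (a₂ - 1) * (k : ℝ) ^ (a₃ - 1) /
          ((k : ℝ) ^ (b₁ - 1) * (k : ℝ) ^ (b₂ - 1)) := by
      simp only [← Real.rpow_add hk', ← Real.rpow_sub hk']
      ring_nf
    rw [hpow]
    generalize (k : ℝ) ^ (a₁ - 1) = p
    field_simp

lemma betaFn_mul_threeF2 {a b c d s : ℝ} (ha : 0 < a) (hs : 0 < s) (h : b + c < d + s) :
    betaFn a s * threeF2 a b c d (a + s) =
      ∫ t in Ioo (0 : ℝ) 1, t ^ (a - 1) * (1 - t) ^ (s - 1) * ₂F₁ b c d t := by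
  have hterm (k : ℕ) : poch a k * poch b k * poch c k / (poch d k * poch (a + s) k * k !) =
      poch b k / k ! * (poch c k / poch d k) * (poch a k / poch (a + s) k) := by ring
  have hsum : Summable fun k : ℕ ↦
      poch b k / k ! * (poch c k / poch d k) * (poch a k / poch (a + s) k) := by
    simpa only [hterm] using
      summable_threeF2 (a₁ := a) (a₂ := b) (a₃ := c) (b₁ := d) (b₂ := a + s) (by linarith)
  simp only [threeF2, hterm, ordinaryHypergeometric_eq_tsum_poch,
    mul_right_comm (poch b _ / _) (_ ^ _)]
  exact (integral_rpow_mul_one_sub_rpow_mul_tsum ha hs hsum).symm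

theorem betaFn_mul_threeF2_kummer {a b c d e : ℝ} (ha : 0 < a) (hae : a < e) (hc : 0 < c)
    (hcd : c < d) (h : a + b + c < d + e) :
    betaFn a (e - a) * threeF2 a b c d e =
      betaFn a (d + e - a - b - c) * threeF2 a (d - b) (d - c) d (d + e - b - c) := by
  have hs : 0 < d + e - a - b - c := by linarith
  have hleft := betaFn_mul_threeF2 (b := b) (c := c) (d := d) ha (sub_pos.2 hae) (by linarith)
  have hright := betaFn_mul_threeF2 (b := d - b) (c := d - c) (d := d) ha hs (by linarith)
  rw [add_sub_cancel] at hleft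
  rw [show a + (d + e - a - b - c) = d + e - b - c by ring] at hright
  rw [hleft, hright]
  refine setIntegral_congr_fun measurableSet_Ioo fun t ht ↦ ?_
  have hexp : d + e - a - b - c - 1 = e - a - 1 + (d - b - c) := by ring
  have habs : |t| < 1 := abs_lt.2 ⟨by linarith [ht.1], ht.2⟩
  rw [ordinaryHypergeometric_euler b hc hcd habs, hexp, Real.rpow_add (sub_pos.2 ht.2)]
  ring

end Kummer

section Specialization

/-- The value `F(r, s)` without its normalization by `N(r)`, which makes sense for real
parameters. -/
noncomputable def unnormalizedF (r s : ℝ) : ℝ :=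
  (2 : ℝ) ^ (1 - 4 * r) * betaFn r (s - r) * threeF2 (1 / 2) (1 / 2) r 1 s

lemma Fval_eq_unnormalizedF_div (r s : ℚ) : Fval r s = unnormalizedF r s / (2 * r.den) := by
  rw [Fval, unnormalizedF]
  ring

lemma threeF2_right_comm (a b c d e : ℝ) : threeF2 a b c d e = threeF2 a c b d e := by
  simp only [threeF2, mul_right_comm (poch a _)]

lemma gamma_one_sub_ne_zero {x : ℝ} (hx : Real.sin (Real.pi * x) ≠ 0) :
    Real.Gamma (1 - x) ≠ 0 := by
  refine right_ne_zero_of_mul (a := Real.Gamma x) ?_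
  rw [Real.Gamma_mul_Gamma_one_sub]
  exact div_ne_zero Real.pi_ne_zero hx

lemma gamma_mul_gamma_one_sub_two_mul_sq {x : ℝ} (hx : Real.sin (Real.pi * x) ≠ 0) :
    Real.Gamma x * Real.Gamma (1 - 2 * x) ^ 2 =
      2 ^ (-(4 * x)) * (1 / Real.sin (Real.pi * x)) * Real.Gamma (1 / 2 - x) ^ 2 *
        Real.Gamma (1 - x) := by
  have hrefl : Real.Gamma x * Real.Gamma (1 - x) = Real.pi / Real.sin (Real.pi * x) :=
    Real.Gamma_mul_Gamma_one_sub x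
  have hdup : Real.Gamma (1 / 2 - x) * Real.Gamma (1 - x) =
      Real.Gamma (1 - 2 * x) * 2 ^ (2 * x) * √Real.pi := by
    convert Real.Gamma_mul_Gamma_add_half (1 / 2 - x) using 3 <;> ring_nf
  have hpow : (2 : ℝ) ^ (-(4 * x)) * (2 ^ (2 * x)) ^ 2 = 1 := by
    rw [← Real.rpow_mul_natCast zero_le_two, ← Real.rpow_add two_pos]
    convert Real.rpow_zero (2 : ℝ) using 2
    push_cast
    ring
  refine mul_right_cancel₀ (gamma_one_sub_ne_zero hx) ?_
  calc Real.Gamma x * Real.Gamma (1 - 2 * x) ^ 2 * Real.Gamma (1 - x)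
      = Real.Gamma (1 - 2 * x) ^ 2 * (√Real.pi ^ 2 / Real.sin (Real.pi * x)) := by
        rw [Real.sq_sqrt Real.pi_pos.le, ← hrefl]
        ring
    _ = 2 ^ (-(4 * x)) * (1 / Real.sin (Real.pi * x)) *
          (Real.Gamma (1 - 2 * x) * 2 ^ (2 * x) * √Real.pi) ^ 2 := by
        linear_combination
          (-Real.Gamma (1 - 2 * x) ^ 2 * (√Real.pi ^ 2 / Real.sin (Real.pi * x))) * hpow
    _ = _ := by
        rw [← hdup]
        ring

lemma betaFn_mul_betaFn_one_half {x : ℝ} (hx : Real.sin (Real.pi * x) ≠ 0) :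
    betaFn x (1 - 2 * x) * betaFn (1 / 2) (1 - 2 * x) =
      (2 : ℝ) ^ (-(4 * x)) * (1 / Real.sin (Real.pi * x)) *
        (betaFn (1 - x) (1 / 2 - x) * betaFn (1 / 2) (1 / 2 - x)) := by
  simp only [betaFn]
  rw [show x + (1 - 2 * x) = 1 - x by ring, show 1 / 2 + (1 / 2 - x) = 1 - x by ring,
    show 1 / 2 + (1 - 2 * x) = 3 / 2 - 2 * x by ring,
    show 1 - x + (1 / 2 - x) = 3 / 2 - 2 * x by ring]
  linear_combination (Real.Gamma (1 / 2) / (Real.Gamma (3 / 2 - 2 * x) * Real.Gamma (1 - x))) *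
    gamma_mul_gamma_one_sub_two_mul_sq hx

theorem kummer_s_eq_one_sub_r_general {x : ℝ} (hx : x < 1 / 2)
    (hsin : Real.sin (Real.pi * x) ≠ 0) :
    unnormalizedF x (1 - x) = (2 : ℝ) ^ (4 - 12 * x) * (1 / Real.sin (Real.pi * x)) *
      unnormalizedF (1 - x) (3 / 2 - 2 * x) := by
  have hkummer : betaFn (1 / 2) (1 / 2 - x) * threeF2 (1 / 2) (1 / 2) x 1 (1 - x) =
      betaFn (1 / 2) (1 - 2 * x) * threeF2 (1 / 2) (1 / 2) (1 - x) 1 (3 / 2 - 2 * x) := by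
    have h := betaFn_mul_threeF2_kummer (a := 1 / 2) (b := x) (c := 1 / 2) (d := 1) (e := 1 - x)
      (by norm_num) (by linarith) (by norm_num) (by norm_num) (by linarith)
    rw [threeF2_right_comm, threeF2_right_comm _ (1 - x)] at h
    convert h using 2 <;> norm_num <;> ring_nf
  have hpow : (2 : ℝ) ^ (1 - 4 * x) * 2 ^ (-(4 * x)) =
      2 ^ (4 - 12 * x) * 2 ^ (1 - 4 * (1 - x)) := by
    simp only [← Real.rpow_add two_pos]
    ring_nf
  have hbeta := betaFn_mul_betaFn_one_half hsin
  rw [unnormalizedF, unnormalizedF, show 1 - x - x = 1 - 2 * x by ring,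
    show 3 / 2 - 2 * x - (1 - x) = 1 / 2 - x by ring]
  refine mul_left_cancel₀ (betaFn_pos one_half_pos (sub_pos.2 hx)).ne' ?_
  set T := threeF2 (1 / 2) (1 / 2) (1 - x) 1 (3 / 2 - 2 * x)
  linear_combination 2 ^ (1 - 4 * x) * betaFn x (1 - 2 * x) * hkummer +
    2 ^ (1 - 4 * x) * T * hbeta + 1 / Real.sin (Real.pi * x) *
      (betaFn (1 - x) (1 / 2 - x) * betaFn (1 / 2) (1 / 2 - x)) * T * hpow

end Specialization

/-- F(r,1−r) = 2^{4−12r}·csc(πr)·F(1−r, 3/2−2r) for 0 < r < 1/2. -/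
theorem kummer_s_eq_one_sub_r (r : ℚ) (hr0 : 0 < r) (hr1 : r < 1/2) :
    Fval r (1 - r) = (2:ℝ) ^ ((4:ℝ) - 12 * (r:ℝ)) * (1 / Real.sin (Real.pi * (r:ℝ))) *
      Fval (1 - r) (3/2 - 2*r) := by
  rify at hr0 hr1
  have hsin : 0 < Real.sin (Real.pi * r) :=
    Real.sin_pos_of_pos_of_lt_pi (by positivity) (by nlinarith [Real.pi_pos])
  have hden : (1 - r).den = r.den := by exact_mod_cast Rat.intCast_sub_den 1 r
  rw [Fval_eq_unnormalizedF_div, Fval_eq_unnormalizedF_div, hden, ← mul_div_assoc]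
  push_cast
  rw [kummer_s_eq_one_sub_r_general hr1 hsin.ne']
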